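/- Let $U\subseteq\mathbb R^2$ be open and connected (and non-empty) and let $x:U\to\mathbb R^3$ be a smooth immersion. For a smooth immersion $y:U\to\mathbb R^3$ and a smooth unit normal field $\nu$ along $y$ put $g_{ij}=\langle y_{/i},y_{/j}\rangle$, $b_{ij}=\langle y_{/ij},\nu\rangle$, $e_{ij}=\langle \nu_{/i},\nu_{/j}\rangle$ (the first, second and third fundamental forms, where $_{/i}=\partial/\partial u^i$), $K=\det(b_{ij})/\det(g_{ij})$ and $H=\tfrac12 g^{ij}b_{ij}$ with $(g^{ij})=(g_{ij})^{-1}$. Let $n=(x_{/1}\times x_{/2})/\|x_{/1}\times x_{/2}\|$ be the Gauss map of $x$, and let $e_{ij},H,K$ be the quantities of $x$ with respect to $n$. Assume that $\det(b_{ij})\neq0$ on $U$ (no parabolic points), and let $\rho\in\mathbb R\setminus\{0\}$ be such that $1-2\rho H+\rho^2K\neq0$ on $U$. Then the parallel surface $x^*=x+\rho n$ is a smooth immersion of $U$, and it has the same unit normal as $x$: the field $n$ is a unit normal field along $x^*$, and more precisely $$\frac{x^*_{/1}\times x^*_{/2}}{\|x^*_{/1}\times x^*_{/2}\|}=\operatorname{sign}(1-2\rho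 H+\rho^2K)\,n .$$ The third fundamental form $e^*_{ij}$ of $x^*$ (which does not depend on the choice of sign of the unit normal of $x^*$) satisfies $e^*_{ij}=e_{ij}$ on $U$. If $x^*$ is oriented by the common unit normal $n^*=n$, then its mean curvature $H^*$ and Gauss curvature $K^*$ satisfy $K^*\neq0$ and $$\frac{H^*}{K^*}=\frac HK-\rho\qquad\text{on }U .$$ -/

import Mathlib

open Matrix

/-- The parameter space `ℝ²`. -/
abbrev Param : Type := Fin 2 → ℝ

/-- Vectors in Euclidean 3-space; the Euclidean inner product is the dot product `⬝ᵥ`. -/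
abbrev Vec3 : Type := Fin 3 → ℝ

/-- Partial derivative of a vector-valued function in the `i`-th coordinate direction. -/
noncomputable def pd (i : Fin 2) (f : Param → Vec3) (u : Param) : Vec3 :=
  fderiv ℝ f u (Pi.single i 1)

/-- The Euclidean norm on `ℝ³`. -/
noncomputable def norm3 (a : Vec3) : ℝ := Real.sqrt (a ⬝ᵥ a)

/-- `x` is an immersion on `U`: the partial derivatives are linearly independent. -/
def Immersed (x : Param → Vec3) (U : Set Param) : Prop :=
  ∀ u ∈ U, LinearIndependent ℝ ![pd 0 x u, pd 1 x u]

/-- The Gauss map `n = (x_{/1} × x_{/2}) / ‖x_{/1} × x_{/2}‖`. -/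
noncomputable def gaussMap (x : Param → Vec3) (u : Param) : Vec3 :=
  (norm3 (crossProduct (pd 0 x u) (pd 1 x u)))⁻¹ • crossProduct (pd 0 x u) (pd 1 x u)

/-- `ν` is a field of unit normal vectors along the surface `x` over `U`. -/
def IsUnitNormalOn (x ν : Param → Vec3) (U : Set Param) : Prop :=
  ∀ u ∈ U, norm3 (ν u) = 1 ∧ ∀ i, pd i x u ⬝ᵥ ν u = 0

/-- Components `g_{ij}` of the first fundamental form of `x`. -/
noncomputable def fformI (x : Param → Vec3) (u : Param) : Matrix (Fin 2) (Fin 2) ℝ :=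
  Matrix.of fun i j => pd i x u ⬝ᵥ pd j x u

/-- Components `b_{ij} = ⟨∂²x/∂u^i∂u^j, ν⟩` of the second fundamental form of the surface `x`
oriented by the unit normal field `ν`. -/
noncomputable def fformII (x ν : Param → Vec3) (u : Param) : Matrix (Fin 2) (Fin 2) ℝ :=
  Matrix.of fun i j => pd i (pd j x) u ⬝ᵥ ν u

/-- Components `e_{ij} = ⟨ν_{/i}, ν_{/j}⟩` of the third fundamental form of a surface with
unit normal field `ν`. -/
noncomputable def fformIII (ν : Param → Vec3) (u : Param) : Matrix (Fin 2) (Fin 2) ℝ :=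
  Matrix.of fun i j => pd i ν u ⬝ᵥ pd j ν u

/-- The Gauss curvature `K = det(b_{ij}) / det(g_{ij})` of the surface `x` oriented by `ν`. -/
noncomputable def gaussCurv (x ν : Param → Vec3) (u : Param) : ℝ :=
  (fformII x ν u).det / (fformI x u).det

/-- The mean curvature `H = (1/2) g^{ij} b_{ij}` of the surface `x` oriented by `ν`. -/
noncomputable def meanCurv (x ν : Param → Vec3) (u : Param) : ℝ :=
  (1 / 2) * ∑ i, ∑ j, (fformI x u)⁻¹ i j * fformII x ν u i j

/-- The parallel surface `x* = x + ρ n` at directed distance `ρ`, `n` the Gauss map of `x`. -/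
noncomputable def parallelSurface (x : Param → Vec3) (ρ : ℝ) (u : Param) : Vec3 :=
  x u + ρ • gaussMap x u

/-- The Jacobian of `f`, whose `i`-th row is the partial derivative in direction `i`. -/
noncomputable def jacobianRows (f : Param → Vec3) (u : Param) : Matrix (Fin 2) (Fin 3) ℝ :=
  Matrix.of fun i => pd i f u

/-! ### Vector algebra in Euclidean 3-space -/

theorem dotProduct_self_pos {c : Vec3} (hc : c ≠ 0) : 0 < c ⬝ᵥ c := by
  have h0 : 0 ≤ c ⬝ᵥ c := by
    simp only [dotProduct, Fin.sum_univ_three]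
    nlinarith [mul_self_nonneg (c 0), mul_self_nonneg (c 1), mul_self_nonneg (c 2)]
  exact lt_of_le_of_ne h0 fun h => hc (dotProduct_self_eq_zero.1 h.symm)

theorem norm3_pos {c : Vec3} (hc : c ≠ 0) : 0 < norm3 c :=
  Real.sqrt_pos.2 (dotProduct_self_pos hc)

theorem norm3_smul (w : ℝ) (c : Vec3) : norm3 (w • c) = |w| * norm3 c := by
  simp only [norm3, smul_dotProduct, dotProduct_smul, smul_eq_mul]
  rw [← mul_assoc, Real.sqrt_mul (mul_self_nonneg w), Real.sqrt_mul_self_eq_abs]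

theorem sign_mul_of_pos_right (a : ℝ) {b : ℝ} (hb : 0 < b) :
    Real.sign (a * b) = Real.sign a := by
  rcases lt_trichotomy a 0 with h | rfl | h
  · rw [Real.sign_of_neg h, Real.sign_of_neg (mul_neg_of_neg_of_pos h hb)]
  · rw [zero_mul]
  · rw [Real.sign_of_pos h, Real.sign_of_pos (mul_pos h hb)]

theorem inv_norm3_smul_smul {w : ℝ} (hw : w ≠ 0) (c : Vec3) :
    (norm3 (w • c))⁻¹ • (w • c) = Real.sign w • ((norm3 c)⁻¹ • c) := by
  rw [norm3_smul, smul_smul, smul_smul]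
  congr 1
  rcases hw.lt_or_gt with h | h
  · rw [Real.sign_of_neg h, abs_of_neg h, mul_inv, inv_neg]
    field_simp
  · rw [Real.sign_of_pos h, abs_of_pos h, mul_inv]
    field_simp

theorem exists_eq_of_dotProduct_cross_eq_zero {a b v : Vec3} (hc : crossProduct a b ≠ 0)
    (hv : v ⬝ᵥ crossProduct a b = 0) : ∃ s t : ℝ, v = s • a + t • b := by
  have hpos := (dotProduct_self_pos hc).ne'
  set c := crossProduct a b with hcdef
  refine ⟨(c ⬝ᵥ c)⁻¹ * (v ⬝ᵥ crossProduct b c), (c ⬝ᵥ c)⁻¹ * (v ⬝ᵥ crossProduct c a), ?_⟩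
  have key : (c ⬝ᵥ c) • v = (v ⬝ᵥ crossProduct b c) • a + (v ⬝ᵥ crossProduct c a) • b
      + (v ⬝ᵥ c) • c := by
    rw [hcdef]
    ext i
    fin_cases i <;>
      simp [cross_apply, dotProduct, Fin.sum_univ_three] <;> ring
  rw [hv, zero_smul, add_zero] at key
  rw [mul_smul, mul_smul, ← smul_add, ← key, smul_smul, inv_mul_cancel₀ hpos, one_smul]

theorem crossProduct_rows_mul (A : Matrix (Fin 2) (Fin 2) ℝ) (X : Matrix (Fin 2) (Fin 3) ℝ) :
    crossProduct ((A * X) 0) ((A * X) 1) = A.det • crossProduct (X 0) (X 1) := by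
  ext i
  fin_cases i <;>
    simp [cross_apply, Matrix.mul_apply, Fin.sum_univ_two, Matrix.det_fin_two] <;> ring

theorem det_mul_transpose_eq_cross (X : Matrix (Fin 2) (Fin 3) ℝ) :
    (X * Xᵀ).det = crossProduct (X 0) (X 1) ⬝ᵥ crossProduct (X 0) (X 1) := by
  simp [cross_apply, Matrix.mul_apply, Fin.sum_univ_three, Matrix.det_fin_two, dotProduct]
  ring

/-! ### Calculus of partial derivatives -/

theorem contDiffAt_pd {f : Param → Vec3} {u : Param} (hf : ContDiffAt ℝ (⊤ : ℕ∞) f u)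
    (i : Fin 2) : ContDiffAt ℝ (⊤ : ℕ∞) (pd i f) u := by
  have h : ContDiffAt ℝ (⊤ : ℕ∞) (fderiv ℝ f) u := hf.fderiv_right (by simp)
  exact h.clm_apply contDiffAt_const

theorem contDiffAt_dotProduct {f g : Param → Vec3} {u : Param}
    (hf : ContDiffAt ℝ (⊤ : ℕ∞) f u) (hg : ContDiffAt ℝ (⊤ : ℕ∞) g u) :
    ContDiffAt ℝ (⊤ : ℕ∞) (fun w => f w ⬝ᵥ g w) u :=
  ContDiffAt.sum fun i _ => (contDiffAt_pi.1 hf i).mul (contDiffAt_pi.1 hg i)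

theorem contDiffAt_crossProduct {f g : Param → Vec3} {u : Param}
    (hf : ContDiffAt ℝ (⊤ : ℕ∞) f u) (hg : ContDiffAt ℝ (⊤ : ℕ∞) g u) :
    ContDiffAt ℝ (⊤ : ℕ∞) (fun w => crossProduct (f w) (g w)) u := by
  have hf' := contDiffAt_pi.1 hf
  have hg' := contDiffAt_pi.1 hg
  refine contDiffAt_pi.2 fun i => ?_
  fin_cases i
  · simpa [cross_apply] using ((hf' 1).mul (hg' 2)).sub ((hf' 2).mul (hg' 1))
  · simpa [cross_apply] using ((hf' 2).mul (hg' 0)).sub ((hf' 0).mul (hg' 2))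
  · simpa [cross_apply] using ((hf' 0).mul (hg' 1)).sub ((hf' 1).mul (hg' 0))

theorem pd_dotProduct_add_eq_zero {f g : Param → Vec3} {u : Param} {c : ℝ}
    (hf : DifferentiableAt ℝ f u) (hg : DifferentiableAt ℝ g u)
    (h : ∀ᶠ w in nhds u, f w ⬝ᵥ g w = c) (i : Fin 2) :
    pd i f u ⬝ᵥ g u + f u ⬝ᵥ pd i g u = 0 := by
  have hd : HasFDerivAt (fun w => ∑ k, f w k * g w k) _ u :=
    HasFDerivAt.fun_sum fun k _ =>
      (hasFDerivAt_pi'.1 hf.hasFDerivAt k).mul (hasFDerivAt_pi'.1 hg.hasFDerivAt k)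
  have h0 : HasFDerivAt (fun w => ∑ k, f w k * g w k) (0 : Param →L[ℝ] ℝ) u :=
    (hasFDerivAt_const c u).congr_of_eventuallyEq h
  have := congrArg (fun L : Param →L[ℝ] ℝ => L (Pi.single i 1)) (hd.unique h0)
  simp [Fin.sum_univ_three] at this
  simp only [pd, dotProduct, Fin.sum_univ_three]
  linarith

theorem pd_congr {f g : Param → Vec3} {u : Param} (h : f =ᶠ[nhds u] g) (i : Fin 2) :
    pd i f u = pd i g u := by
  rw [pd, pd, h.fderiv_eq]

theorem pd_const_smul {f : Param → Vec3} {u : Param} (hf : DifferentiableAt ℝ f u) (c : ℝ)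
    (i : Fin 2) : pd i (fun w => c • f w) u = c • pd i f u := by
  rw [pd, fderiv_fun_const_smul hf]
  rfl

/-! ### The Gauss map -/

theorem Immersed.cross_ne_zero {x : Param → Vec3} {U : Set Param} (h : Immersed x U)
    {u : Param} (hu : u ∈ U) : crossProduct (pd 0 x u) (pd 1 x u) ≠ 0 :=
  crossProduct_ne_zero_iff_linearIndependent.2 (h u hu)

theorem contDiffAt_gaussMap {x : Param → Vec3} {u : Param} (hx : ContDiffAt ℝ (⊤ : ℕ∞) x u)
    (hc : crossProduct (pd 0 x u) (pd 1 x u) ≠ 0) :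
    ContDiffAt ℝ (⊤ : ℕ∞) (gaussMap x) u := by
  have h := contDiffAt_crossProduct (contDiffAt_pd hx 0) (contDiffAt_pd hx 1)
  exact (((contDiffAt_dotProduct h h).sqrt (dotProduct_self_pos hc).ne').inv
    (norm3_pos hc).ne').smul h

theorem gaussMap_dotProduct_self {x : Param → Vec3} {u : Param}
    (hc : crossProduct (pd 0 x u) (pd 1 x u) ≠ 0) : gaussMap x u ⬝ᵥ gaussMap x u = 1 := by
  have h := (norm3_pos hc).ne'
  have hs : norm3 (crossProduct (pd 0 x u) (pd 1 x u)) ^ 2 = _ :=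
    Real.sq_sqrt (dotProduct_self_pos hc).le
  simp only [gaussMap, smul_dotProduct, dotProduct_smul, smul_eq_mul, ← hs]
  field_simp

theorem pd_dotProduct_gaussMap (x : Param → Vec3) (u : Param) (i : Fin 2) :
    pd i x u ⬝ᵥ gaussMap x u = 0 := by
  fin_cases i <;> simp [gaussMap, dotProduct_smul]

theorem dotProduct_cross_eq_zero_of_gaussMap {x : Param → Vec3} {u : Param} {v : Vec3}
    (hc : crossProduct (pd 0 x u) (pd 1 x u) ≠ 0) (hv : v ⬝ᵥ gaussMap x u = 0) :
    v ⬝ᵥ crossProduct (pd 0 x u) (pd 1 x u) = 0 := by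
  rw [gaussMap, dotProduct_smul, smul_eq_mul] at hv
  exact (mul_eq_zero.1 hv).resolve_left (inv_ne_zero (norm3_pos hc).ne')

/-! ### Weingarten equations and curvatures -/

theorem fformI_eq (x : Param → Vec3) (u : Param) :
    fformI x u = jacobianRows x u * (jacobianRows x u)ᵀ := by
  ext i j
  rfl

/-- The Weingarten equations: the derivative of the Gauss map is tangential. -/
theorem exists_weingarten {x : Param → Vec3} {U : Set Param} (hU : IsOpen U)
    (hx : ∀ u ∈ U, ContDiffAt ℝ (⊤ : ℕ∞) x u) (himm : Immersed x U) {u : Param} (hu : u ∈ U) :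
    ∃ S : Matrix (Fin 2) (Fin 2) ℝ,
      jacobianRows (gaussMap x) u = -(S * jacobianRows x u) := by
  have hc := himm.cross_ne_zero hu
  have hn : DifferentiableAt ℝ (gaussMap x) u :=
    (contDiffAt_gaussMap (hx u hu) hc).differentiableAt (by simp)
  have htan (i : Fin 2) : ∃ s t : ℝ, pd i (gaussMap x) u = s • pd 0 x u + t • pd 1 x u := by
    refine exists_eq_of_dotProduct_cross_eq_zero hc (dotProduct_cross_eq_zero_of_gaussMap hc ?_)
    have h := pd_dotProduct_add_eq_zero hn hn (Filter.eventually_of_mem (hU.mem_nhds hu)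
      fun w hw => gaussMap_dotProduct_self (himm.cross_ne_zero hw)) i
    rw [dotProduct_comm (gaussMap x u)] at h
    linarith
  choose s t hst using htan
  refine ⟨Matrix.of fun i => ![-s i, -t i], ?_⟩
  ext i k
  have := congrFun (hst i) k
  simp only [Pi.add_apply, Pi.smul_apply, smul_eq_mul] at this
  simp [jacobianRows, Matrix.mul_apply, this, add_comm]

/-- If `dν = -S dy` with `ν` normal to `y`, then the second fundamental form is `S` times the
first. -/
theorem fformII_eq_mul_fformI {y ν : Param → Vec3} {u : Param}
    (hy : ContDiffAt ℝ (⊤ : ℕ∞) y u) (hν : DifferentiableAt ℝ ν u)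
    (hnormal : ∀ᶠ w in nhds u, ∀ i, pd i y w ⬝ᵥ ν w = 0) {S : Matrix (Fin 2) (Fin 2) ℝ}
    (hS : jacobianRows ν u = -(S * jacobianRows y u)) :
    fformII y ν u = S * fformI y u := by
  have h : fformII y ν u = -(jacobianRows ν u * (jacobianRows y u)ᵀ) := by
    ext i j
    have := pd_dotProduct_add_eq_zero ((contDiffAt_pd hy j).differentiableAt (by simp)) hν
      (hnormal.mono fun w hw => hw j) i
    rw [dotProduct_comm (pd j y u)] at this
    exact eq_neg_of_add_eq_zero_left this
  rw [h, hS, fformI_eq, Matrix.neg_mul, neg_neg, Matrix.mul_assoc]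

theorem gaussCurv_eq_det {y ν : Param → Vec3} {u : Param} {S : Matrix (Fin 2) (Fin 2) ℝ}
    (hg : (fformI y u).det ≠ 0) (h : fformII y ν u = S * fformI y u) :
    gaussCurv y ν u = S.det := by
  rw [gaussCurv, h, Matrix.det_mul, mul_div_cancel_right₀ _ hg]

theorem meanCurv_eq_trace {y ν : Param → Vec3} {u : Param} {S : Matrix (Fin 2) (Fin 2) ℝ}
    (hg : (fformI y u).det ≠ 0) (h : fformII y ν u = S * fformI y u) :
    meanCurv y ν u = (1 / 2) * S.trace := by
  have hsymm : (fformI y u)ᵀ = fformI y u := by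
    rw [fformI_eq, Matrix.transpose_mul, Matrix.transpose_transpose]
  have hsum : ∑ i, ∑ j, (fformI y u)⁻¹ i j * fformII y ν u i j
      = (((fformI y u)⁻¹)ᵀ * fformII y ν u).trace := by
    simp only [Matrix.trace, Matrix.diag, Matrix.mul_apply, Matrix.transpose_apply]
    exact Finset.sum_comm
  rw [meanCurv, hsum, Matrix.transpose_nonsing_inv, hsymm, h, Matrix.trace_mul_comm,
    Matrix.mul_assoc, Matrix.mul_nonsing_inv _ (isUnit_iff_ne_zero.2 hg), Matrix.mul_one]

theorem det_fformI_ne_zero {y : Param → Vec3} {u : Param}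
    (hc : crossProduct (pd 0 y u) (pd 1 y u) ≠ 0) : (fformI y u).det ≠ 0 := by
  rw [fformI_eq, det_mul_transpose_eq_cross]
  exact (dotProduct_self_pos hc).ne'

theorem det_one_sub_smul (S : Matrix (Fin 2) (Fin 2) ℝ) (ρ : ℝ) :
    (1 - ρ • S).det = 1 - 2 * ρ * ((1 / 2) * S.trace) + ρ ^ 2 * S.det := by
  simp [Matrix.det_fin_two, Matrix.trace_fin_two]
  ring

theorem trace_mul_inv_one_sub_smul (S : Matrix (Fin 2) (Fin 2) ℝ) (ρ : ℝ) :
    (S * (1 - ρ • S)⁻¹).trace = (S.trace - 2 * ρ * S.det) / (1 - ρ • S).det := by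
  rw [Matrix.inv_def, Ring.inverse_eq_inv', Matrix.mul_smul, Matrix.trace_smul, smul_eq_mul,
    div_eq_inv_mul]
  congr 1
  simp [Matrix.adjugate_fin_two, Matrix.trace_fin_two, Matrix.det_fin_two, Matrix.mul_apply]
  ring

/-! ### The parallel surface -/

theorem contDiffAt_parallelSurface {x : Param → Vec3} {u : Param}
    (hx : ContDiffAt ℝ (⊤ : ℕ∞) x u) (hc : crossProduct (pd 0 x u) (pd 1 x u) ≠ 0) (ρ : ℝ) :
    ContDiffAt ℝ (⊤ : ℕ∞) (parallelSurface x ρ) u :=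
  hx.add ((contDiffAt_gaussMap hx hc).const_smul ρ)

theorem jacobianRows_parallelSurface {x : Param → Vec3} {u : Param}
    (hx : ContDiffAt ℝ (⊤ : ℕ∞) x u) (hc : crossProduct (pd 0 x u) (pd 1 x u) ≠ 0) (ρ : ℝ)
    {S : Matrix (Fin 2) (Fin 2) ℝ} (hS : jacobianRows (gaussMap x) u = -(S * jacobianRows x u)) :
    jacobianRows (parallelSurface x ρ) u = (1 - ρ • S) * jacobianRows x u := by
  have hn := (contDiffAt_gaussMap hx hc).differentiableAt (by simp)
  have h : jacobianRows (parallelSurface x ρ) u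
      = jacobianRows x u + ρ • jacobianRows (gaussMap x) u := by
    ext i k
    have : pd i (parallelSurface x ρ) u = pd i x u + ρ • pd i (gaussMap x) u := by
      rw [← pd_const_smul hn]
      unfold pd parallelSurface
      rw [fderiv_fun_add (hx.differentiableAt (by simp)) (hn.fun_const_smul ρ)]
      rfl
    exact congrFun this k
  rw [h, hS, Matrix.sub_mul, Matrix.one_mul, smul_neg, Matrix.smul_mul, sub_eq_add_neg]

/-- The main pointwise relation `x*_{/1} × x*_{/2} = (1 - 2ρH + ρ²K) x_{/1} × x_{/2}`. -/
theorem cross_pd_parallelSurface {x : Param → Vec3} {U : Set Param} (hU : IsOpen U)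
    (hx : ∀ u ∈ U, ContDiffAt ℝ (⊤ : ℕ∞) x u) (himm : Immersed x U) (ρ : ℝ)
    {u : Param} (hu : u ∈ U) :
    crossProduct (pd 0 (parallelSurface x ρ) u) (pd 1 (parallelSurface x ρ) u) =
      (1 - 2 * ρ * meanCurv x (gaussMap x) u + ρ ^ 2 * gaussCurv x (gaussMap x) u) •
        crossProduct (pd 0 x u) (pd 1 x u) := by
  obtain ⟨S, hS⟩ := exists_weingarten hU hx himm hu
  have hc := himm.cross_ne_zero hu
  have hII := fformII_eq_mul_fformI (hx u hu)
    ((contDiffAt_gaussMap (hx u hu) hc).differentiableAt (by simp))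
    (Filter.Eventually.of_forall fun w => pd_dotProduct_gaussMap x w) hS
  rw [meanCurv_eq_trace (det_fformI_ne_zero hc) hII, gaussCurv_eq_det (det_fformI_ne_zero hc) hII,
    ← det_one_sub_smul]
  have h := crossProduct_rows_mul (1 - ρ • S) (jacobianRows x u)
  rwa [← jacobianRows_parallelSurface (hx u hu) hc ρ hS] at h

theorem pd_parallelSurface_dotProduct_gaussMap {x : Param → Vec3} {U : Set Param}
    (hU : IsOpen U) (hx : ∀ u ∈ U, ContDiffAt ℝ (⊤ : ℕ∞) x u) (himm : Immersed x U) (ρ : ℝ)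
    {u : Param} (hu : u ∈ U) (i : Fin 2) :
    pd i (parallelSurface x ρ) u ⬝ᵥ gaussMap x u = 0 := by
  obtain ⟨S, hS⟩ := exists_weingarten hU hx himm hu
  have h := jacobianRows_parallelSurface (hx u hu) (himm.cross_ne_zero hu) ρ hS
  have hx0 : jacobianRows x u *ᵥ gaussMap x u = 0 :=
    funext fun j => pd_dotProduct_gaussMap x u j
  have : jacobianRows (parallelSurface x ρ) u *ᵥ gaussMap x u = 0 := by
    rw [h, ← Matrix.mulVec_mulVec, hx0, Matrix.mulVec_zero]
  exact congrFun this i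

/-- Where the sign of a continuous nonvanishing function scales a field, the third fundamental form
does not change. -/
theorem fformIII_eq_of_eventually_sign_smul {ν μ : Param → Vec3} {u : Param} {D : Param → ℝ}
    (hν : DifferentiableAt ℝ ν u) (hD : ContinuousAt D u) (hD0 : D u ≠ 0)
    (h : ∀ᶠ w in nhds u, μ w = Real.sign (D w) • ν w) : fformIII μ u = fformIII ν u := by
  have hsign : ∀ᶠ w in nhds u, Real.sign (D w) = Real.sign (D u) := by
    rcases hD0.lt_or_gt with h0 | h0
    · filter_upwards [hD.eventually_lt_const h0] with w hw
      rw [Real.sign_of_neg hw, Real.sign_of_neg h0]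
    · filter_upwards [hD.eventually_const_lt h0] with w hw
      rw [Real.sign_of_pos hw, Real.sign_of_pos h0]
  have heq : μ =ᶠ[nhds u] fun w => Real.sign (D u) • ν w := by
    filter_upwards [h, hsign] with w h1 h2
    rw [h1, h2]
  have hsq : Real.sign (D u) * Real.sign (D u) = 1 := by
    rcases Real.sign_apply_eq_of_ne_zero _ hD0 with h1 | h1 <;> rw [h1] <;> norm_num
  ext i j
  simp only [fformIII, Matrix.of_apply, pd_congr heq, pd_const_smul hν, smul_dotProduct,
    dotProduct_smul, smul_eq_mul]
  rw [← mul_assoc, hsq, one_mul]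

/-- The parallel surface `x* = x + ρ n` is a smooth immersion with unit normal field `n`; its Gauss
map formed from `x*_{/1} × x*_{/2}` is `n` up to the sign of `1 - 2ρH + ρ²K`; its third fundamental
form is that of `x`; and, oriented by the common normal `n`, it has `K* ≠ 0` and
`H*/K* = H/K - ρ`. -/
theorem stmt15 (U : Set Param) (x : Param → Vec3)
    (hU : IsOpen U) (hUconn : IsConnected U)
    (hx : ContDiffOn ℝ (⊤ : ℕ∞) x U) (himm : Immersed x U)
    (hpar : ∀ u ∈ U, (fformII x (gaussMap x) u).det ≠ 0)
    (ρ : ℝ) (hρ : ρ ≠ 0)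
    (hreg : ∀ u ∈ U,
      1 - 2 * ρ * meanCurv x (gaussMap x) u + ρ ^ 2 * gaussCurv x (gaussMap x) u ≠ 0) :
    ContDiffOn ℝ (⊤ : ℕ∞) (parallelSurface x ρ) U ∧
    Immersed (parallelSurface x ρ) U ∧
    IsUnitNormalOn (parallelSurface x ρ) (gaussMap x) U ∧
    ∀ u ∈ U,
      gaussMap (parallelSurface x ρ) u =
        Real.sign (1 - 2 * ρ * meanCurv x (gaussMap x) u
          + ρ ^ 2 * gaussCurv x (gaussMap x) u) • gaussMap x u ∧
      fformIII (gaussMap (parallelSurface x ρ)) u = fformIII (gaussMap x) u ∧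
      gaussCurv (parallelSurface x ρ) (gaussMap x) u ≠ 0 ∧
      meanCurv (parallelSurface x ρ) (gaussMap x) u /
          gaussCurv (parallelSurface x ρ) (gaussMap x) u =
        meanCurv x (gaussMap x) u / gaussCurv x (gaussMap x) u - ρ := by
  have hxU : ∀ u ∈ U, ContDiffAt ℝ (⊤ : ℕ∞) x u := fun u hu => hx.contDiffAt (hU.mem_nhds hu)
  have hcross := fun {u} (hu : u ∈ U) => himm.cross_ne_zero hu
  have hcross' := fun {u} (hu : u ∈ U) => cross_pd_parallelSurface hU hxU himm ρ hu
  have hy : ∀ u ∈ U, ContDiffAt ℝ (⊤ : ℕ∞) (parallelSurface x ρ) u := fun u hu =>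
    contDiffAt_parallelSurface (hxU u hu) (hcross hu) ρ
  have hyimm : Immersed (parallelSurface x ρ) U := fun u hu => by
    refine crossProduct_ne_zero_iff_linearIndependent.1 ?_
    rw [hcross' hu]
    exact smul_ne_zero (hreg u hu) (hcross hu)
  have hgauss : ∀ u ∈ U, gaussMap (parallelSurface x ρ) u =
      Real.sign (1 - 2 * ρ * meanCurv x (gaussMap x) u
        + ρ ^ 2 * gaussCurv x (gaussMap x) u) • gaussMap x u := fun u hu => by
    rw [gaussMap, hcross' hu, inv_norm3_smul_smul (hreg u hu)]
    rfl
  refine ⟨fun u hu => (hy u hu).contDiffWithinAt, hyimm, fun u hu => ⟨?_, fun i =>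
    pd_parallelSurface_dotProduct_gaussMap hU hxU himm ρ hu i⟩, fun u hu => ?_⟩
  · rw [norm3, gaussMap_dotProduct_self (hcross hu), Real.sqrt_one]
  have hc := hcross hu
  have hn := contDiffAt_gaussMap (hxU u hu) hc
  have hnd : DifferentiableAt ℝ (gaussMap x) u := hn.differentiableAt (by simp)
  obtain ⟨S, hS⟩ := exists_weingarten hU hxU himm hu
  have hg := det_fformI_ne_zero hc
  have hII := fformII_eq_mul_fformI (hxU u hu) hnd
    (Filter.Eventually.of_forall fun w => pd_dotProduct_gaussMap x w) hS
  have hH := meanCurv_eq_trace hg hII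
  have hK := gaussCurv_eq_det hg hII
  have hdet : (1 - ρ • S).det ≠ 0 := by
    rw [det_one_sub_smul, ← hH, ← hK]
    exact hreg u hu
  have hS0 : S.det ≠ 0 := fun h => hpar u hu (by rw [hII, Matrix.det_mul, h, zero_mul])
  have hS' : jacobianRows (gaussMap x) u
      = -(S * (1 - ρ • S)⁻¹ * jacobianRows (parallelSurface x ρ) u) := by
    rw [jacobianRows_parallelSurface (hxU u hu) hc ρ hS, hS, Matrix.mul_assoc S,
      ← Matrix.mul_assoc _ (1 - ρ • S), Matrix.nonsing_inv_mul _ (isUnit_iff_ne_zero.2 hdet),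
      Matrix.one_mul]
  have hg' := det_fformI_ne_zero (hyimm.cross_ne_zero hu)
  have hII' := fformII_eq_mul_fformI (hy u hu) hnd
    (Filter.eventually_of_mem (hU.mem_nhds hu) fun w hw =>
      pd_parallelSurface_dotProduct_gaussMap hU hxU himm ρ hw) hS'
  have hH' := meanCurv_eq_trace hg' hII'
  have hK' : gaussCurv (parallelSurface x ρ) (gaussMap x) u = S.det / (1 - ρ • S).det := by
    rw [gaussCurv_eq_det hg' hII', Matrix.det_mul, Matrix.det_nonsing_inv, Ring.inverse_eq_inv',
      div_eq_mul_inv]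
  refine ⟨hgauss u hu, ?_, ?_, ?_⟩
  · -- `(x*_{/1} × x*_{/2}) · (x_{/1} × x_{/2})` is smooth and has the sign of `1 - 2ρH + ρ²K`
    refine fformIII_eq_of_eventually_sign_smul (D := fun w =>
      crossProduct (pd 0 (parallelSurface x ρ) w) (pd 1 (parallelSurface x ρ) w) ⬝ᵥ
        crossProduct (pd 0 x w) (pd 1 x w)) hnd ?_ ?_ ?_
    · exact (contDiffAt_dotProduct
        (contDiffAt_crossProduct (contDiffAt_pd (hy u hu) 0) (contDiffAt_pd (hy u hu) 1))
        (contDiffAt_crossProduct (contDiffAt_pd (hxU u hu) 0)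
          (contDiffAt_pd (hxU u hu) 1))).continuousAt
    · simp only [hcross' hu, smul_dotProduct, smul_eq_mul]
      exact mul_ne_zero (hreg u hu) (dotProduct_self_pos hc).ne'
    · filter_upwards [hU.mem_nhds hu] with w hw
      rw [hgauss w hw, hcross' hw, smul_dotProduct, smul_eq_mul,
        sign_mul_of_pos_right _ (dotProduct_self_pos (hcross hw))]
  · rw [hK']
    exact div_ne_zero hS0 hdet
  · rw [hK', hH', hH, hK, trace_mul_inv_one_sub_smul]
    field_simp
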